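/- Let a, b, c be pairwise coprime positive integers with c² = a² + b² + ab, and let m be a positive integer such that the equilateral triangle with side length m·ab tiles into m²·ab congruent copies of the triangle with side lengths (a, b, c). Then the isosceles triangle with side lengths (m·a·c, m·a·c, m·a·(b+2a)) tiles into m²·a·(b+2a) congruent copies of the triangle with side lengths (a, b, c). -/

import Mathlib

noncomputable section

abbrev Plane := EuclideanSpace ℝ (Fin 2)

/-- The point (x, y) in the Euclidean plane. -/
def pt (x y : ℝ) : Plane := (WithLp.equiv 2 (Fin 2 → ℝ)).symm ![x, y]

/-- `Δ` is a triangle with side lengths `(p, q, r)`: the convex hull of points `P, Q, R`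
with `dist Q R = p`, `dist P R = q`, `dist P Q = r`. -/
def IsTriangle (p q r : ℝ) (Δ : Set Plane) : Prop :=
  ∃ P Q R : Plane, dist Q R = p ∧ dist P R = q ∧ dist P Q = r ∧
    Δ = convexHull ℝ {P, Q, R}

/-- `S` tiles into `N` congruent copies of the `(p, q, r)` triangle: there are isometries
`f 1, …, f N` of the plane and a triangle `Δ` with side lengths `(p, q, r)` such that
`S` is the union of the `f i '' Δ` and their interiors are pairwise disjoint. -/
def TilesInto (S : Set Plane) (N : ℕ) (p q r : ℝ) : Prop :=
  ∃ (f : Fin N → Plane ≃ᵢ Plane) (Δ : Set Plane),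
    IsTriangle p q r Δ ∧
    S = ⋃ i, f i '' Δ ∧
    ∀ i j : Fin N, i ≠ j → interior (f i '' Δ) ∩ interior (f j '' Δ) = ∅

/-- The equilateral triangle with side length `X`. -/
def EquilateralTri (X : ℝ) : Set Plane :=
  convexHull ℝ {pt 0 0, pt X 0, pt (X/2) (X * Real.sqrt 3 / 2)}


lemma mem_hull (P u v x : Plane) : x ∈ convexHull ℝ {P, P + u, P + v} ↔
    ∃ s t : ℝ, 0 ≤ s ∧ 0 ≤ t ∧ s + t ≤ 1 ∧ x = P + s • u + t • v := by
  constructor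
  · intro hx
    rw [convexHull_insert (by simp), mem_convexJoin] at hx
    obtain ⟨a, ha, y, hy, hx⟩ := hx
    rw [Set.mem_singleton_iff] at ha
    subst ha
    rw [convexHull_pair] at hy
    obtain ⟨α, β, hα, hβ, hs, rfl⟩ := hy
    obtain ⟨α', β', hα', hβ', hs', rfl⟩ := hx
    refine ⟨β' * α, β' * β, by positivity, by positivity, ?_, ?_⟩
    · rw [← mul_add, hs]; linarith
    · have e1 : α = 1 - β := by linarith
      have e2 : α' = 1 - β' := by linarith
      subst e1 e2
      module
  · rintro ⟨s, t, hs, ht, hst, rfl⟩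
    have := (convex_convexHull ℝ {P, P + u, P + v}).sum_mem (t := (Finset.univ : Finset (Fin 3)))
      (w := ![1 - s - t, s, t]) (z := ![P, P + u, P + v]) ?_ ?_ ?_
    · convert this using 1
      simp [Fin.sum_univ_three]
      module
    · intro i _; fin_cases i <;> simp <;> linarith
    · simp [Fin.sum_univ_three]; ring
    · intro i _; apply subset_convexHull; fin_cases i <;> simp

lemma exists_normal (w : Plane) (hw : w ≠ 0) : ∃ n : Plane, n ≠ 0 ∧ inner ℝ n w = 0 := by
  refine ⟨!₂[-w 1, w 0], ?_, ?_⟩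
  · intro h0
    apply hw
    have h1 := congrArg (fun z : Plane => z 0) h0
    have h2 := congrArg (fun z : Plane => z 1) h0
    simp at h1 h2
    ext i; fin_cases i <;> simp [h1, h2]
  · simp [PiLp.inner_apply, Fin.sum_univ_two]; ring

lemma sep (n : Plane) (hn : n ≠ 0) (e k D : ℝ) (A B : Set Plane)
    (hA : ∀ x ∈ A, ∃ s, s ≤ k ∧ inner ℝ n x = e + s * D)
    (hB : ∀ x ∈ B, ∃ s, k ≤ s ∧ inner ℝ n x = e + s * D) :
    interior A ∩ interior B = ∅ := by
  rw [← interior_inter, Set.eq_empty_iff_forall_notMem]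
  intro x hx
  have hmem : ∀ y ∈ A ∩ B, inner ℝ n y = e + k * D := by
    rintro y ⟨h1, h2⟩
    obtain ⟨s, hs, e1⟩ := hA y h1
    obtain ⟨t, ht, e2⟩ := hB y h2
    have : (t - s) * D = 0 := by linarith
    rcases mul_eq_zero.1 this with h | h
    · have : s = k := by linarith
      rw [e1, this]
    · rw [e1, h]; simp
  have hc : Filter.Tendsto (fun t : ℝ => x + t • n) (nhds 0) (nhds x) := by
    have : Continuous (fun t : ℝ => x + t • n) := by fun_prop
    have := this.tendsto 0
    simpa using this
  have hev := hc.eventually (mem_interior_iff_mem_nhds.1 hx)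
  have hev2 : ∀ᶠ t in nhdsWithin (0 : ℝ) (Set.Ioi 0), x + t • n ∈ A ∩ B :=
    hev.filter_mono nhdsWithin_le_nhds
  obtain ⟨t, ht1, ht2⟩ := (hev2.and self_mem_nhdsWithin).exists
  have h1 := hmem _ ht1
  have h2 := hmem _ (interior_subset hx)
  rw [inner_add_right, inner_smul_right, h2, real_inner_self_eq_norm_sq] at h1
  have h3 : 0 < ‖n‖ := norm_pos_iff.2 hn
  have h4 : (0 : ℝ) < t := ht2
  have : 0 < t * ‖n‖ ^ 2 := by positivity
  linarith

lemma lin_ext (u v u' v' : Plane) (hu : ‖u‖ = ‖u'‖) (hv : ‖v‖ = ‖v'‖)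
    (huv : ‖u - v‖ = ‖u' - v'‖) :
    ∃ L : Plane ≃ₗᵢ[ℝ] Plane, L u = u' ∧ L v = v' := by
  set L1 := (ℝ ∙ (u - u'))ᗮ.reflection with hL1
  have h1 : L1 u = u' := Submodule.reflection_sub hu
  have hv1 : ‖L1 v‖ = ‖v'‖ := by rw [L1.norm_map, hv]
  set L2 := (ℝ ∙ (L1 v - v'))ᗮ.reflection with hL2
  have h2 : L2 (L1 v) = v' := Submodule.reflection_sub hv1
  have h3 : L2 u' = u' := by
    rw [hL2, Submodule.reflection_eq_self_iff, Submodule.mem_orthogonal_singleton_iff_inner_right]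
    have h4 : ‖u' - L1 v‖ = ‖u' - v'‖ := by
      rw [← huv, ← L1.norm_map (u - v), map_sub, h1]
    have e1 := norm_sub_sq_real u' (L1 v)
    have e2 := norm_sub_sq_real u' v'
    rw [h4, hv1] at e1
    rw [inner_sub_left, real_inner_comm, real_inner_comm u' v']
    linarith
  exact ⟨L1.trans L2, by simp [h1, h3], by simp [h2]⟩

lemma tri_ext (P Q R P' Q' R' : Plane) (h1 : dist Q R = dist Q' R') (h2 : dist P R = dist P' R')
    (h3 : dist P Q = dist P' Q') :
    ∃ f : Plane ≃ᵢ Plane, f '' convexHull ℝ {P, Q, R} = convexHull ℝ {P', Q', R'} := by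
  obtain ⟨L, hL1, hL2⟩ := lin_ext (Q - P) (R - P) (Q' - P') (R' - P')
    (by rw [← dist_eq_norm, ← dist_eq_norm, dist_comm, h3, dist_comm])
    (by rw [← dist_eq_norm, ← dist_eq_norm, dist_comm, h2, dist_comm])
    (by rw [sub_sub_sub_cancel_right, sub_sub_sub_cancel_right, ← dist_eq_norm,
      ← dist_eq_norm, h1])
  rw [map_sub] at hL1 hL2
  have eQ : Q' = P' + (L Q - L P) := by rw [hL1]; abel
  have eR : R' = P' + (L R - L P) := by rw [hL2]; abel
  let g : Plane ≃ᵃⁱ[ℝ] Plane :=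
    L.toAffineIsometryEquiv.trans (AffineIsometryEquiv.constVAdd ℝ Plane (P' - L P))
  have hg : ∀ x, g x = P' - L P + L x := fun x => by simp [g]
  refine ⟨g.toIsometryEquiv, ?_⟩
  have : (g.toIsometryEquiv : Plane → Plane) = (g.toAffineEquiv.toAffineMap : Plane →ᵃ[ℝ] Plane) := by
    ext x; rfl
  rw [this, AffineMap.image_convexHull, ← this]
  congr 1
  rw [Set.image_insert_eq, Set.image_pair]
  have hg' : ∀ x, g.toIsometryEquiv x = P' - L P + L x := hg
  rw [hg', hg', hg', eQ, eR]
  congr 1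
  · abel
  · congr 1
    · abel
    · congr 1; abel

lemma isTri_image (f : Plane ≃ᵢ Plane) {p q r : ℝ} {S : Set Plane} (hS : IsTriangle p q r S) :
    IsTriangle p q r (f '' S) := by
  obtain ⟨P, Q, R, h1, h2, h3, rfl⟩ := hS
  refine ⟨f P, f Q, f R, by rw [f.isometry.dist_eq, h1],
    by rw [f.isometry.dist_eq, h2], by rw [f.isometry.dist_eq, h3], ?_⟩
  have : (f : Plane → Plane) = (f.toRealAffineIsometryEquiv.toAffineEquiv.toAffineMap : Plane →ᵃ[ℝ] Plane) := by
    ext x; simp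
  rw [this, AffineMap.image_convexHull, ← this, Set.image_insert_eq, Set.image_pair]

lemma isTri_congr {p q r : ℝ} {S S' : Set Plane} (hS : IsTriangle p q r S)
    (hS' : IsTriangle p q r S') : ∃ f : Plane ≃ᵢ Plane, f '' S = S' := by
  obtain ⟨P, Q, R, h1, h2, h3, rfl⟩ := hS
  obtain ⟨P', Q', R', h1', h2', h3', rfl⟩ := hS'
  exact tri_ext _ _ _ _ _ _ (h1.trans h1'.symm) (h2.trans h2'.symm) (h3.trans h3'.symm)

/-- Tiling by an indexed family of triangles. -/
def Tl (ι : Type) (S : Set Plane) (p q r : ℝ) : Prop :=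
  ∃ T : ι → Set Plane, (∀ i, IsTriangle p q r (T i)) ∧ S = ⋃ i, T i ∧
    ∀ i j, i ≠ j → interior (T i) ∩ interior (T j) = ∅

lemma Tl.of {S : Set Plane} {N : ℕ} {p q r : ℝ} (hT : TilesInto S N p q r) :
    Tl (Fin N) S p q r := by
  obtain ⟨f, Δ, h1, h2, h3⟩ := hT
  exact ⟨fun i => f i '' Δ, fun i => isTri_image _ h1, h2, h3⟩

lemma Tl.to {S : Set Plane} {N : ℕ} {p q r : ℝ} (hT : Tl (Fin N) S p q r)
    {Δ : Set Plane} (hΔ : IsTriangle p q r Δ) : TilesInto S N p q r := by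
  obtain ⟨T, h1, h2, h3⟩ := hT
  choose f hf using fun i => isTri_congr hΔ (h1 i)
  refine ⟨f, Δ, hΔ, ?_, ?_⟩
  · simp_rw [hf]; exact h2
  · simp_rw [hf]; exact h3

lemma Tl.equiv {ι κ : Type} (e : ι ≃ κ) {S : Set Plane} {p q r : ℝ} (hT : Tl ι S p q r) :
    Tl κ S p q r := by
  obtain ⟨T, h1, h2, h3⟩ := hT
  refine ⟨fun k => T (e.symm k), fun k => h1 _, ?_, fun i j hij => h3 _ _ (by simpa using hij)⟩
  rw [h2]
  exact (e.symm.surjective.iUnion_comp T).symm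

lemma Tl.image {ι : Type} (f : Plane ≃ᵢ Plane) {S : Set Plane} {p q r : ℝ} (hT : Tl ι S p q r) :
    Tl ι (f '' S) p q r := by
  obtain ⟨T, h1, h2, h3⟩ := hT
  refine ⟨fun k => f '' T k, fun k => isTri_image _ (h1 _), ?_, fun i j hij => ?_⟩
  · rw [h2, Set.image_iUnion]
  · have hh : ∀ A : Set Plane, interior (f '' A) = f '' interior A :=
      fun A => (f.toHomeomorph.image_interior A).symm
    rw [hh, hh, ← Set.image_inter f.injective, h3 i j hij, Set.image_empty]

lemma Tl.union {ι κ : Type} {S S' : Set Plane} {p q r : ℝ} (hT : Tl ι S p q r)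
    (hT' : Tl κ S' p q r) (hd : interior S ∩ interior S' = ∅) : Tl (ι ⊕ κ) (S ∪ S') p q r := by
  obtain ⟨T, h1, h2, h3⟩ := hT
  obtain ⟨T', h1', h2', h3'⟩ := hT'
  have hs : ∀ i, interior (T i) ⊆ interior S := fun i =>
    interior_mono (h2 ▸ Set.subset_iUnion T i)
  have hs' : ∀ i, interior (T' i) ⊆ interior S' := fun i =>
    interior_mono (h2' ▸ Set.subset_iUnion T' i)
  refine ⟨Sum.elim T T', ?_, ?_, ?_⟩
  · rintro (i | i)
    · exact h1 i
    · exact h1' i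
  · rw [Set.iUnion_sum, h2, h2']; rfl
  · rintro (i | i) (j | j) hij
    · exact h3 i j (by simpa using hij)
    · exact Set.subset_eq_empty (Set.inter_subset_inter (hs i) (hs' j)) hd
    · rw [Set.inter_comm]
      exact Set.subset_eq_empty (Set.inter_subset_inter (hs j) (hs' i)) hd
    · exact h3' i j (by simpa using hij)

lemma split (P u v : Plane) (θ : ℝ) (h0 : 0 ≤ θ) (h1 : θ ≤ 1) (hne : v ≠ θ • u) :
    convexHull ℝ {P, P + u, P + v} =
      convexHull ℝ {P, P + θ • u, P + v} ∪ convexHull ℝ {P + θ • u, P + u, P + v} ∧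
    interior (convexHull ℝ {P, P + θ • u, P + v}) ∩
      interior (convexHull ℝ {P + θ • u, P + u, P + v}) = ∅ := by
  have e1 : P + u = (P + θ • u) + (1 - θ) • u := by module
  have e2 : P + v = (P + θ • u) + (v - θ • u) := by module
  have hB : ∀ x, x ∈ convexHull ℝ {P + θ • u, P + u, P + v} ↔ ∃ s t : ℝ, 0 ≤ s ∧ 0 ≤ t ∧ s + t ≤ 1 ∧
      x = P + θ • u + s • (1 - θ) • u + t • (v - θ • u) := by
    intro x
    rw [e1, e2]; exact mem_hull _ _ _ _
  constructor
  · ext x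
    rw [Set.mem_union, hB, mem_hull, mem_hull]
    constructor
    · rintro ⟨s, t, hs, ht, hst, rfl⟩
      by_cases hc : s ≤ θ * (1 - t)
      · left
        rcases h0.eq_or_lt with h | h
        · refine ⟨0, t, le_rfl, ht, by linarith, ?_⟩
          have : s = 0 := by rw [← h] at hc; linarith
          rw [this, ← h]; module
        · refine ⟨s / θ, t, by positivity, ht, ?_, ?_⟩
          · have : s / θ ≤ 1 - t := by rw [div_le_iff₀ h]; linarith
            linarith
          · rw [smul_smul, div_mul_cancel₀ _ h.ne']
      · right
        push Not at hc
        have h : 0 < 1 - θ := by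
          by_contra hcon
          have : θ = 1 := by linarith
          subst this
          linarith
        refine ⟨(s - θ * (1 - t)) / (1 - θ), t, div_nonneg (by linarith) h.le, ht, ?_, ?_⟩
        · have : (s - θ * (1 - t)) / (1 - θ) ≤ 1 - t := by rw [div_le_iff₀ h]; linarith
          linarith
        · rw [smul_smul, div_mul_cancel₀ _ h.ne']; module
    · rintro (⟨s, t, hs, ht, hst, rfl⟩ | ⟨s, t, hs, ht, hst, rfl⟩)
      · refine ⟨s * θ, t, by positivity, ht, by nlinarith, by module⟩
      · refine ⟨θ + s * (1 - θ) - t * θ, t, ?_, ht, ?_, by module⟩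
        · nlinarith [mul_nonneg hs (sub_nonneg.2 h1)]
        · nlinarith [mul_nonneg hs (sub_nonneg.2 h1), mul_nonneg h0 ht]
  · obtain ⟨n, hn, hn0⟩ := exists_normal (v - θ • u) (sub_ne_zero.2 hne)
    rw [inner_sub_right, inner_smul_right] at hn0
    apply sep n hn (inner ℝ n P + θ * inner ℝ n u) 0 (inner ℝ n u)
    · intro x hx
      rw [mem_hull] at hx
      obtain ⟨s, t, hs, ht, hst, rfl⟩ := hx
      refine ⟨θ * (s + t - 1), by nlinarith, ?_⟩
      simp only [inner_add_right, inner_smul_right]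
      linear_combination t * hn0
    · intro x hx
      rw [hB] at hx
      obtain ⟨s, t, hs, ht, hst, rfl⟩ := hx
      refine ⟨s * (1 - θ), mul_nonneg hs (by linarith), ?_⟩
      simp only [inner_add_right, inner_smul_right, inner_sub_right]
      linear_combination t * hn0

lemma split' (P X Q R : Plane) (θ : ℝ) (h0 : 0 ≤ θ) (h1 : θ ≤ 1) (hX : X = P + θ • (Q - P))
    (hne : R ≠ X) :
    convexHull ℝ {P, Q, R} = convexHull ℝ {P, X, R} ∪ convexHull ℝ {X, Q, R} ∧
    interior (convexHull ℝ {P, X, R}) ∩ interior (convexHull ℝ {X, Q, R}) = ∅ := by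
  have := split P (Q - P) (R - P) θ h0 h1 (by
    intro hh; apply hne; rw [hX, ← hh]; abel)
  rw [← hX, add_sub_cancel, add_sub_cancel] at this
  exact this


/-- Unit cell tile: upward (`true`) or downward (`false`). -/
def cell (P u v : Plane) : Bool → ℤ → ℤ → Set Plane
  | true, A, B => {x | ∃ s t : ℝ, A ≤ s ∧ B ≤ t ∧ s + t ≤ A + B + 1 ∧ x = P + s • u + t • v}
  | false, A, B => {x | ∃ s t : ℝ, s ≤ A + 1 ∧ t ≤ B + 1 ∧ A + B + 1 ≤ s + t ∧
      x = P + s • u + t • v}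

lemma cell_bd {P u v : Plane} {d : Bool} {A B : ℤ} {x : Plane} (hx : x ∈ cell P u v d A B) :
    ∃ s t : ℝ, A ≤ s ∧ s ≤ A + 1 ∧ B ≤ t ∧ t ≤ B + 1 ∧ x = P + s • u + t • v := by
  cases d
  · obtain ⟨s, t, h1, h2, h3, h4⟩ := hx
    exact ⟨s, t, by linarith, h1, by linarith, h2, h4⟩
  · obtain ⟨s, t, h1, h2, h3, h4⟩ := hx
    exact ⟨s, t, h1, by linarith, h2, by linarith, h4⟩

lemma cell_tri (P u v : Plane) (d : Bool) (A B : ℤ) (p q r : ℝ)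
    (h1 : ‖u - v‖ = p) (h2 : ‖v‖ = q) (h3 : ‖u‖ = r) : IsTriangle p q r (cell P u v d A B) := by
  cases d
  · set X := P + ((A : ℝ) + 1) • u + ((B : ℝ) + 1) • v with hX
    refine ⟨X, X + -u, X + -v, ?_, ?_, ?_, ?_⟩
    · rw [dist_eq_norm, ← h1, ← norm_neg]; congr 1; abel
    · rw [dist_eq_norm, ← h2]; congr 1; abel
    · rw [dist_eq_norm, ← h3]; congr 1; abel
    · ext x
      rw [mem_hull]
      constructor
      · rintro ⟨s, t, hs, ht, hst, rfl⟩
        exact ⟨A + 1 - s, B + 1 - t, by linarith, by linarith, by linarith, by rw [hX]; module⟩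
      · rintro ⟨s, t, hs, ht, hst, rfl⟩
        exact ⟨A + 1 - s, B + 1 - t, by linarith, by linarith, by linarith, by rw [hX]; module⟩
  · set X := P + (A : ℝ) • u + (B : ℝ) • v with hX
    refine ⟨X, X + u, X + v, ?_, ?_, ?_, ?_⟩
    · rw [dist_eq_norm, ← h1]; congr 1; abel
    · rw [dist_eq_norm, ← h2, ← norm_neg]; congr 1; abel
    · rw [dist_eq_norm, ← h3, ← norm_neg]; congr 1; abel
    · ext x
      rw [mem_hull]
      constructor
      · rintro ⟨s, t, hs, ht, hst, rfl⟩
        exact ⟨s - A, t - B, by linarith, by linarith, by linarith, by rw [hX]; module⟩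
      · rintro ⟨s, t, hs, ht, hst, rfl⟩
        exact ⟨A + s, B + t, by linarith, by linarith, by linarith, by rw [hX]; module⟩

lemma cell_disj1 (P u v : Plane) (hv : v ≠ 0) (d d' : Bool) (A B A' B' : ℤ) (hA : A < A') :
    interior (cell P u v d A B) ∩ interior (cell P u v d' A' B') = ∅ := by
  obtain ⟨n, hn, hn0⟩ := exists_normal v hv
  have hA' : (A : ℝ) + 1 ≤ A' := by exact_mod_cast hA
  apply sep n hn (inner ℝ n P) A' (inner ℝ n u)
  all_goals
    intro x hx
    obtain ⟨s, t, h1, h2, h3, h4, rfl⟩ := cell_bd hx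
    refine ⟨s, by linarith, ?_⟩
    simp only [inner_add_right, inner_smul_right, hn0]
    ring

lemma cell_disj2 (P u v : Plane) (hu : u ≠ 0) (d d' : Bool) (A B A' B' : ℤ) (hB : B < B') :
    interior (cell P u v d A B) ∩ interior (cell P u v d' A' B') = ∅ := by
  obtain ⟨n, hn, hn0⟩ := exists_normal u hu
  have hB' : (B : ℝ) + 1 ≤ B' := by exact_mod_cast hB
  apply sep n hn (inner ℝ n P) B' (inner ℝ n v)
  all_goals
    intro x hx
    obtain ⟨s, t, h1, h2, h3, h4, rfl⟩ := cell_bd hx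
    refine ⟨t, by linarith, ?_⟩
    simp only [inner_add_right, inner_smul_right, hn0]
    ring

lemma cell_disj3 (P u v : Plane) (huv : u - v ≠ 0) (A B : ℤ) :
    interior (cell P u v true A B) ∩ interior (cell P u v false A B) = ∅ := by
  obtain ⟨n, hn, hn0⟩ := exists_normal (u - v) huv
  rw [inner_sub_right] at hn0
  apply sep n hn (inner ℝ n P) (A + B + 1) (inner ℝ n v)
  all_goals
    rintro x ⟨s, t, h1, h2, h3, rfl⟩
    refine ⟨s + t, by linarith, ?_⟩
    simp only [inner_add_right, inner_smul_right]
    linear_combination s * hn0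

lemma cell_disj (P u v : Plane) (hu : u ≠ 0) (hv : v ≠ 0) (huv : u - v ≠ 0) (d d' : Bool)
    (A B A' B' : ℤ) (hne : ¬ (d = d' ∧ A = A' ∧ B = B')) :
    interior (cell P u v d A B) ∩ interior (cell P u v d' A' B') = ∅ := by
  rcases lt_trichotomy A A' with hA | hA | hA
  · exact cell_disj1 P u v hv _ _ _ _ _ _ hA
  · rcases lt_trichotomy B B' with hB | hB | hB
    · exact cell_disj2 P u v hu _ _ _ _ _ _ hB
    · subst hA hB
      cases d <;> cases d'
      · simp at hne
      · rw [Set.inter_comm]; exact cell_disj3 P u v huv _ _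
      · exact cell_disj3 P u v huv _ _
      · simp at hne
    · rw [Set.inter_comm]; exact cell_disj2 P u v hu _ _ _ _ _ _ hB
  · rw [Set.inter_comm]; exact cell_disj1 P u v hv _ _ _ _ _ _ hA

lemma quad (P u v : Plane) (n : ℕ) (hn : 0 < n) (p q r : ℝ) (hp : p ≠ 0) (hq : q ≠ 0) (hr : r ≠ 0)
    (h1 : ‖u - v‖ = p) (h2 : ‖v‖ = q) (h3 : ‖u‖ = r) :
    Tl (Fin n × Fin n) (convexHull ℝ {P, P + (n : ℝ) • u, P + (n : ℝ) • v}) p q r := by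
  have hu : u ≠ 0 := by rintro rfl; simp at h3; exact hr h3.symm
  have hv : v ≠ 0 := by rintro rfl; simp at h2; exact hq h2.symm
  have huv : u - v ≠ 0 := by intro hh; rw [hh] at h1; simp at h1; exact hp h1.symm
  have hn' : (0 : ℝ) < n := by exact_mod_cast hn
  let T : Fin n × Fin n → Set Plane := fun k =>
    if (k.1 : ℕ) + k.2 < n then cell P u v true (k.1 : ℕ) (k.2 : ℕ)
    else cell P u v false ((n : ℤ) - 1 - (k.1 : ℕ)) ((n : ℤ) - 1 - (k.2 : ℕ))
  have hS : ∀ x, x ∈ convexHull ℝ {P, P + (n : ℝ) • u, P + (n : ℝ) • v} ↔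
      ∃ s t : ℝ, 0 ≤ s ∧ 0 ≤ t ∧ s + t ≤ n ∧ x = P + s • u + t • v := by
    intro x
    rw [mem_hull]
    constructor
    · rintro ⟨s, t, hs, ht, hst, rfl⟩
      exact ⟨s * n, t * n, by positivity, by positivity, by nlinarith, by module⟩
    · rintro ⟨s, t, hs, ht, hst, rfl⟩
      refine ⟨s / n, t / n, by positivity, by positivity, ?_, ?_⟩
      · rw [← add_div, div_le_one hn']; exact hst
      · rw [smul_smul, smul_smul, div_mul_cancel₀ _ hn'.ne', div_mul_cancel₀ _ hn'.ne']
  refine ⟨T, ?_, ?_, ?_⟩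
  · intro k
    simp only [T]
    split_ifs <;> exact cell_tri _ _ _ _ _ _ _ _ _ h1 h2 h3
  · ext x
    rw [hS, Set.mem_iUnion]
    constructor
    · rintro ⟨s, t, hs, ht, hst, hx⟩
      -- choose cell with `A + B + 1 ≤ n`
      have key : ∃ (d : Bool) (A B : ℕ), x ∈ cell P u v d A B ∧
          (if d then A + B < n else A + B + 1 < n) := by
        have f1 := Nat.floor_le hs
        have f2 := Nat.floor_le ht
        have f3 := Nat.lt_floor_add_one s
        have f4 := Nat.lt_floor_add_one t
        set A := ⌊s⌋₊
        set B := ⌊t⌋₊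
        have hAB : A + B ≤ n := by
          have : (A : ℝ) + B ≤ n := by linarith
          exact_mod_cast this
        rcases hAB.eq_or_lt with hEq | hlt
        · have hEq' : (A : ℝ) + B = n := by exact_mod_cast hEq
          have hsA : s = A := by linarith
          have htB : t = B := by linarith
          rcases Nat.eq_zero_or_pos A with hA | hA
          · refine ⟨true, A, B - 1, ⟨s, t, by simp [hsA], ?_, ?_, hx⟩, ?_⟩
            · have : 1 ≤ B := by omega
              push_cast [this]; linarith
            · have : 1 ≤ B := by omega
              push_cast [this]; linarith
            · simp; omega
          · refine ⟨true, A - 1, B, ⟨s, t, ?_, by simp [htB], ?_, hx⟩, ?_⟩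
            · push_cast [hA]; linarith
            · push_cast [hA]; linarith
            · simp; omega
        · by_cases hc : s + t ≤ A + B + 1
          · exact ⟨true, A, B, ⟨s, t, by simpa using f1, by simpa using f2, by simpa using hc, hx⟩,
              by simpa using hlt⟩
          · push Not at hc
            refine ⟨false, A, B, ⟨s, t, by simpa using f3.le, by simpa using f4.le,
              by simpa using hc.le, hx⟩, ?_⟩
            have : (A : ℝ) + B + 1 < n := by linarith
            simp only [Bool.false_eq_true, if_false]
            exact_mod_cast this
      obtain ⟨d, A, B, hx, hd⟩ := key
      cases d
      · simp at hd
        refine ⟨(⟨n - 1 - A, by omega⟩, ⟨n - 1 - B, by omega⟩), ?_⟩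
        simp only [T]
        rw [if_neg (by omega)]
        have e1 : (n : ℤ) - 1 - ((n - 1 - A : ℕ) : ℤ) = A := by omega
        have e2 : (n : ℤ) - 1 - ((n - 1 - B : ℕ) : ℤ) = B := by omega
        rw [e1, e2]
        exact hx
      · simp at hd
        refine ⟨(⟨A, by omega⟩, ⟨B, by omega⟩), ?_⟩
        simp only [T]
        rw [if_pos (by omega)]
        exact hx
    · rintro ⟨⟨⟨i, hi⟩, ⟨j, hj⟩⟩, hx⟩
      simp only [T] at hx
      split_ifs at hx with hc
      · obtain ⟨s, t, g1, g2, g3, rfl⟩ := hx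
        have hc' : (i : ℝ) + j + 1 ≤ n := by exact_mod_cast hc
        have := Nat.cast_nonneg (α := ℝ) i
        have := Nat.cast_nonneg (α := ℝ) j
        push_cast at g1 g2 g3
        exact ⟨s, t, by linarith, by linarith, by linarith, rfl⟩
      · obtain ⟨s, t, g1, g2, g3, rfl⟩ := hx
        have hc' : (n : ℝ) ≤ i + j := by exact_mod_cast not_lt.1 hc
        have : (i : ℝ) + 1 ≤ n := by exact_mod_cast hi
        have : (j : ℝ) + 1 ≤ n := by exact_mod_cast hj
        push_cast at g1 g2 g3
        exact ⟨s, t, by linarith, by linarith, by linarith, rfl⟩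
  · rintro ⟨⟨i, hi⟩, ⟨j, hj⟩⟩ ⟨⟨i', hi'⟩, ⟨j', hj'⟩⟩ hne
    simp only [ne_eq, Prod.mk.injEq, Fin.mk.injEq] at hne
    simp only [T]
    split_ifs <;> apply cell_disj P u v hu hv huv <;> simp <;> omega

lemma quad' (n : ℕ) (hn : 0 < n) (p q r : ℝ) (hp : p ≠ 0) (hq : q ≠ 0) (hr : r ≠ 0) (S : Set Plane)
    (hS : IsTriangle (n * p) (n * q) (n * r) S) : Tl (Fin n × Fin n) S p q r := by
  obtain ⟨P, Q, R, h1, h2, h3, rfl⟩ := hS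
  have hn' : (0 : ℝ) < n := by exact_mod_cast hn
  have key := quad P ((n : ℝ)⁻¹ • (Q - P)) ((n : ℝ)⁻¹ • (R - P)) n hn p q r hp hq hr
    (by rw [← smul_sub, sub_sub_sub_cancel_right, norm_smul, ← dist_eq_norm, h1]
        simp; field_simp)
    (by rw [norm_smul, ← dist_eq_norm, dist_comm, h2]; simp; field_simp)
    (by rw [norm_smul, ← dist_eq_norm, dist_comm, h3]; simp; field_simp)
  rw [smul_inv_smul₀ hn'.ne', smul_inv_smul₀ hn'.ne', add_sub_cancel, add_sub_cancel] at key
  exact key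


lemma isTri_equil (X : ℝ) (hX : 0 ≤ X) : IsTriangle X X X (EquilateralTri X) := by
  have h3 : Real.sqrt 3 ^ 2 = 3 := Real.sq_sqrt (by norm_num)
  refine ⟨_, _, _, ?_, ?_, ?_, rfl⟩
  all_goals
    rw [EuclideanSpace.dist_eq, Real.sqrt_eq_iff_eq_sq (by positivity) hX]
    simp [pt, Fin.sum_univ_two, Real.dist_eq, sq_abs]
    try linear_combination (X ^ 2 / 4) * h3

/-- Squared distance from a vertex to a point on the base. -/
lemma base_dist (P Q R : Plane) (θ : ℝ) (L M : ℝ) (h1 : dist Q R = L) (h2 : dist P R = L)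
    (h3 : dist P Q = M) : dist (P + θ • (Q - P)) R ^ 2 = L ^ 2 - θ * (1 - θ) * M ^ 2 := by
  have e1 : ‖(Q - P) - (R - P)‖ = L := by rw [sub_sub_sub_cancel_right, ← dist_eq_norm, h1]
  have e2 : ‖R - P‖ = L := by rw [← dist_eq_norm, dist_comm, h2]
  have e3 : ‖Q - P‖ = M := by rw [← dist_eq_norm, dist_comm, h3]
  have e4 : P + θ • (Q - P) - R = θ • (Q - P) - (R - P) := by abel
  rw [dist_eq_norm, e4]
  have f1 := norm_sub_sq_real (Q - P) (R - P)
  have f2 := norm_sub_sq_real (θ • (Q - P)) (R - P)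
  rw [inner_smul_left, norm_smul, mul_pow, Real.norm_eq_abs, sq_abs] at f2
  rw [e1, e2, e3] at f1
  rw [e2, e3] at f2
  simp at f2
  rw [f2]
  linear_combination (-θ) * f1

theorem stmt14 (a b c : ℕ) (ha : 0 < a) (hb : 0 < b) (hc : 0 < c)
    (hab : Nat.Coprime a b) (hac : Nat.Coprime a c) (hbc : Nat.Coprime b c)
    (h : c ^ 2 = a ^ 2 + b ^ 2 + a * b) (m : ℕ) (hm : 0 < m)
    (heq : TilesInto (EquilateralTri ((m : ℝ) * a * b)) (m ^ 2 * a * b) a b c) :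
    ∀ Δ : Set Plane,
      IsTriangle ((m : ℝ) * a * c) ((m : ℝ) * a * c) ((m : ℝ) * a * (b + 2 * a)) Δ →
      TilesInto Δ (m ^ 2 * a * (b + 2 * a)) a b c := by
  rintro Δ ⟨P, Q, R, d1, d2, d3, rfl⟩
  have hmR : (0 : ℝ) < m := by exact_mod_cast hm
  have haR : (0 : ℝ) < a := by exact_mod_cast ha
  have hbR : (0 : ℝ) < b := by exact_mod_cast hb
  have hcR : (0 : ℝ) < c := by exact_mod_cast hc
  have hR : (c : ℝ) ^ 2 = a ^ 2 + b ^ 2 + a * b := by exact_mod_cast h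
  have hw : (0 : ℝ) < b + 2 * a := by positivity
  have hD : dist Q P = (m : ℝ) * a * (b + 2 * a) := by rw [dist_comm, d3]
  set X := P + ((a : ℝ) / (b + 2 * a)) • (Q - P) with hX
  set Y := P + (((a : ℝ) + b) / (b + 2 * a)) • (Q - P) with hY
  have hXR : dist X R = m * a * b := by
    have := base_dist P Q R (a / (b + 2 * a)) _ _ d1 d2 d3
    rw [← sq_eq_sq₀ dist_nonneg (by positivity), this]
    field_simp
    rw [hR]; ring
  have hYR : dist Y R = m * a * b := by
    have := base_dist P Q R ((a + b) / (b + 2 * a)) _ _ d1 d2 d3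
    rw [← sq_eq_sq₀ dist_nonneg (by positivity), this]
    field_simp
    rw [hR]; ring
  have hPX : dist P X = m * a * a := by
    rw [hX, dist_self_add_right, norm_smul, ← dist_eq_norm, hD, Real.norm_of_nonneg (by positivity)]
    field_simp
  have hXY : dist X Y = m * a * b := by
    have : Y - X = ((b : ℝ) / (b + 2 * a)) • (Q - P) := by
      rw [hX, hY, add_div]; module
    rw [dist_comm, dist_eq_norm, this, norm_smul, ← dist_eq_norm, hD,
      Real.norm_of_nonneg (by positivity)]
    field_simp
  have hYQ : dist Y Q = m * a * a := by
    have : Q - Y = ((a : ℝ) / (b + 2 * a)) • (Q - P) := by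
      have e : ((a : ℝ) + b) / (b + 2 * a) = 1 - a / (b + 2 * a) := by field_simp; ring
      rw [hY, e]; module
    rw [dist_comm, dist_eq_norm, this, norm_smul, ← dist_eq_norm, hD,
      Real.norm_of_nonneg (by positivity)]
    field_simp
  have hmab : (0 : ℝ) < m * a * b := by positivity
  have hRX : R ≠ X := by
    intro hh; rw [← hh, dist_self] at hXR; linarith
  have hRY : R ≠ Y := by
    intro hh; rw [← hh, dist_self] at hYR; linarith
  obtain ⟨s1, s2⟩ := split' P X Q R (a / (b + 2 * a)) (by positivity)
    (by rw [div_le_one hw]; linarith) hX hRX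
  obtain ⟨s3, s4⟩ := split' X Y Q R (b / (b + a)) (by positivity)
    (by rw [div_le_one (by positivity)]; linarith) (by
      have e1 : Q - X = (1 - (a : ℝ) / (b + 2 * a)) • (Q - P) := by rw [hX]; module
      have e2 : ((a : ℝ) + b) / (b + 2 * a) =
        a / (b + 2 * a) + b / (b + a) * (1 - a / (b + 2 * a)) := by field_simp; ring
      rw [e1, hY, e2, hX]; module) hRY
  have hn : 0 < m * a := Nat.mul_pos hm ha
  have q1 : Tl (Fin (m * a) × Fin (m * a)) (convexHull ℝ {P, X, R}) a b c := by
    apply quad' _ hn _ _ _ haR.ne' hbR.ne' hcR.ne'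
    refine ⟨R, P, X, ?_, ?_, ?_, ?_⟩
    · rw [hPX]; push_cast; ring
    · rw [dist_comm, hXR]; push_cast; ring
    · rw [dist_comm, d2]; push_cast; ring
    · congr 1; ext z; simp; tauto
  have q2 : Tl (Fin (m * a) × Fin (m * a)) (convexHull ℝ {Y, Q, R}) a b c := by
    apply quad' _ hn _ _ _ haR.ne' hbR.ne' hcR.ne'
    refine ⟨R, Q, Y, ?_, ?_, ?_, ?_⟩
    · rw [dist_comm, hYQ]; push_cast; ring
    · rw [dist_comm, hYR]; push_cast; ring
    · rw [dist_comm, d1]; push_cast; ring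
    · congr 1; ext z; simp; tauto
  have q3 : Tl (Fin (m ^ 2 * a * b)) (convexHull ℝ {X, Y, R}) a b c := by
    obtain ⟨f, hf⟩ := isTri_congr (isTri_equil _ hmab.le)
      (⟨X, Y, R, hYR, hXR, hXY, rfl⟩ : IsTriangle ((m : ℝ) * a * b) (m * a * b) (m * a * b) _)
    rw [← hf]
    exact (Tl.of heq).image f
  have q4 := q1.union (s3 ▸ q3.union q2 s4) s2
  rw [← s1] at q4
  obtain ⟨_, Δ, hΔ, _, _⟩ := heq
  refine (q4.equiv (Fintype.equivFinOfCardEq ?_)).to hΔ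
  simp
  ring
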